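/- Let q ∈ (0,1), β ∈ [0,2), n a positive integer, let θ_n be the unique root on [0,1) of Σ_{ν=0}^∞ q^{(2ν+1)n}·cos((2ν+1)θπ − βπ/2) = 0, set y_0 = θ_n π/n, and let s ∈ {0,1} be such that (−1)^s = sgn sin(n y_0 − βπ/2). Define r_0(y_0) = r_0^{(1)}(y_0) + r_0^{(3)}(y_0), where r_0^{(1)}(y_0) = 2·Σ_{m=2}^∞ (q^{(2m−1)n}/((2m−1)n))·cos((2m−1)n y_0 − (β+1)π/2) and r_0^{(3)}(y_0) = (−1)^s·2·(q^n/n)·(|sin(n y_0 − βπ/2)| − 1). Then |r_0(y_0)| ≤ (8/(3n))·q^{3n}/(1 − q^{2n}). -/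

import Mathlib

open Real

/-!
Write `x = q ^ n` and `φ = n y₀ - β π / 2`. Each part of `r₀` is compared with
`|x| ^ 3 / (1 - |x| ^ 2)`, the sum of the odd powers of `|x|` from the third on. In the tail
`r₀⁽¹⁾` every coefficient is at most `1 / (3 n)`, which contributes `2 / (3 n)` to the constant.
The leading term `x cos φ` of the root equation balances all the later ones, which bounds
`|x| |cos φ|`; since `1 - |sin φ| ≤ |cos φ|`, the part `r₀⁽³⁾` contributes `2 / n`.
-/

section PowerSeries

variable {K : Type*} [NormedDivisionRing K] {x : K} {d : ℕ}

theorem hasSum_pow_mul_add (hx : ‖x‖ < 1) (hd : d ≠ 0) (k : ℕ) :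
    HasSum (fun m : ℕ => x ^ (d * m + k)) (x ^ k / (1 - x ^ d)) := by
  have hxd : ‖x ^ d‖ < 1 := by
    rw [norm_pow]
    exact pow_lt_one₀ (norm_nonneg x) hx hd
  simpa only [← pow_mul, ← pow_add, add_comm k, div_eq_mul_inv] using
    (hasSum_geometric_of_norm_lt_one hxd).mul_left (x ^ k)

variable {a : ℕ → K} {C : ℝ}

theorem norm_pow_mul_le_of_norm_le {b : K} (hb : ‖b‖ ≤ C) (j : ℕ) :
    ‖x ^ j * b‖ ≤ ‖x‖ ^ j * C := by
  rw [norm_mul, norm_pow]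
  gcongr

theorem norm_tsum_pow_mul_le (hx : ‖x‖ < 1) (hd : d ≠ 0) (k : ℕ) (ha : ∀ m, ‖a m‖ ≤ C) :
    ‖∑' m, x ^ (d * m + k) * a m‖ ≤ ‖x‖ ^ k / (1 - ‖x‖ ^ d) * C :=
  tsum_of_norm_bounded ((hasSum_pow_mul_add (by rwa [norm_norm]) hd k).mul_right C)
    fun m => norm_pow_mul_le_of_norm_le (ha m) _

theorem summable_pow_mul_of_norm_le [CompleteSpace K] (hx : ‖x‖ < 1) (hd : d ≠ 0) (k : ℕ)
    (ha : ∀ m, ‖a m‖ ≤ C) : Summable fun m => x ^ (d * m + k) * a m :=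
  .of_norm_bounded ((hasSum_pow_mul_add (by rwa [norm_norm]) hd k).summable.mul_right C)
    fun m => norm_pow_mul_le_of_norm_le (ha m) _

theorem norm_leading_term_le_of_tsum_eq_zero [CompleteSpace K] (hx : ‖x‖ < 1) (hd : d ≠ 0)
    (k : ℕ) (ha : ∀ m, ‖a m‖ ≤ C) (hsum : ∑' m, x ^ (d * m + k) * a m = 0) :
    ‖x ^ k * a 0‖ ≤ ‖x‖ ^ (d + k) / (1 - ‖x‖ ^ d) * C := by
  rw [(summable_pow_mul_of_norm_le hx hd k ha).tsum_eq_zero_add, mul_zero, zero_add] at hsum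
  rw [eq_neg_of_add_eq_zero_left hsum, norm_neg]
  simpa only [mul_add_one, add_assoc] using
    norm_tsum_pow_mul_le hx hd (d + k) fun m => ha (m + 1)

end PowerSeries

theorem one_sub_abs_sin_le_abs_cos (φ : ℝ) : 1 - |sin φ| ≤ |cos φ| := by
  have hsin : sin φ ^ 2 ≤ |sin φ| := by
    rw [← sq_abs]
    exact pow_le_of_le_one (abs_nonneg _) (abs_sin_le_one φ) two_ne_zero
  have hcos : cos φ ^ 2 ≤ |cos φ| := by
    rw [← sq_abs]
    exact pow_le_of_le_one (abs_nonneg _) (abs_cos_le_one φ) two_ne_zero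
  linarith [sin_sq_add_cos_sq φ]

theorem abs_tsum_odd_pow_div_mul_cos_le {x c : ℝ} (hx : |x| < 1) (hc : 0 < c) (ψ : ℕ → ℝ) :
    |∑' m : ℕ, x ^ (2 * m + 3) / ((2 * (m : ℝ) + 3) * c) * cos (ψ m)| ≤
      |x| ^ 3 / (1 - |x| ^ 2) * (1 / (3 * c)) := by
  have hcoeff (m : ℕ) : ‖cos (ψ m) / ((2 * (m : ℝ) + 3) * c)‖ ≤ 1 / (3 * c) := by
    rw [norm_div, norm_of_nonneg (by positivity : 0 ≤ (2 * (m : ℝ) + 3) * c)]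
    gcongr
    · exact abs_cos_le_one _
    · linarith [m.cast_nonneg (α := ℝ)]
  simpa only [div_mul_eq_mul_div, mul_div_assoc, norm_eq_abs] using
    norm_tsum_pow_mul_le hx two_ne_zero 3 hcoeff

theorem abs_mul_one_sub_abs_sin_le_of_tsum_eq_zero {x t φ : ℝ} (hx : |x| < 1)
    (hroot : ∑' ν : ℕ, x ^ (2 * ν + 1) * cos ((2 * (ν : ℝ) + 1) * t - φ) = 0) :
    |x| * (1 - |sin (t - φ)|) ≤ |x| ^ 3 / (1 - |x| ^ 2) := by
  have hcos : |x| * |cos (t - φ)| ≤ |x| ^ 3 / (1 - |x| ^ 2) := by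
    simpa [abs_mul] using norm_leading_term_le_of_tsum_eq_zero hx two_ne_zero 1
      (fun ν => abs_cos_le_one ((2 * (ν : ℝ) + 1) * t - φ)) hroot
  exact (mul_le_mul_of_nonneg_left (one_sub_abs_sin_le_abs_cos _) (abs_nonneg x)).trans hcos

theorem abs_mul_abs_sin_sub_one_le_of_tsum_eq_zero {x t φ c ε : ℝ} (hx : |x| < 1)
    (hc : 0 ≤ c) (hε : |ε| ≤ 1)
    (hroot : ∑' ν : ℕ, x ^ (2 * ν + 1) * cos ((2 * (ν : ℝ) + 1) * t - φ) = 0) :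
    |ε * 2 * (x / c) * (|sin (t - φ)| - 1)| ≤ |x| ^ 3 / (1 - |x| ^ 2) * (2 / c) := by
  have hsin : 0 ≤ 1 - |sin (t - φ)| := sub_nonneg.2 (abs_sin_le_one _)
  calc |ε * 2 * (x / c) * (|sin (t - φ)| - 1)|
      = |ε| * (|x| * (1 - |sin (t - φ)|) * (2 / c)) := by
        rw [abs_mul, abs_mul, abs_mul, abs_two, abs_div, abs_of_nonneg hc, abs_sub_comm,
          abs_of_nonneg hsin]
        ring
    _ ≤ |x| * (1 - |sin (t - φ)|) * (2 / c) := mul_le_of_le_one_left (by positivity) hε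
    _ ≤ |x| ^ 3 / (1 - |x| ^ 2) * (2 / c) := by
        gcongr
        exact abs_mul_one_sub_abs_sin_le_of_tsum_eq_zero hx hroot

theorem r0_bound_general {q : ℝ} (hq : |q| < 1) {n : ℕ} (hn : 0 < n) (β θ : ℝ)
    (hroot : ∑' ν : ℕ, q ^ ((2 * ν + 1) * n) *
      cos ((2 * (ν : ℝ) + 1) * θ * π - β * π / 2) = 0)
    {y₀ : ℝ} (hy₀ : y₀ = θ * π / n) {ε : ℝ} (hε : |ε| ≤ 1) :
    |(2 * ∑' m : ℕ, q ^ ((2 * m + 3) * n) / ((2 * (m : ℝ) + 3) * n) *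
        cos ((2 * (m : ℝ) + 3) * n * y₀ - (β + 1) * π / 2)) +
      ε * 2 * (q ^ n / n) * (|sin ((n : ℝ) * y₀ - β * π / 2)| - 1)| ≤
    (8 / (3 * n)) * (|q| ^ (3 * n) / (1 - |q| ^ (2 * n))) := by
  have hn' : (0 : ℝ) < n := mod_cast hn
  have hqn : |q ^ n| < 1 := by
    rw [abs_pow]
    exact pow_lt_one₀ (abs_nonneg q) hq hn.ne'
  have hny : θ * π = n * y₀ := by rw [hy₀]; field_simp
  simp only [pow_mul', mul_assoc _ θ π, hny] at hroot ⊢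
  rw [← abs_pow q n]
  have htail := abs_tsum_odd_pow_div_mul_cos_le hqn hn'
    fun m => (2 * (m : ℝ) + 3) * n * y₀ - (β + 1) * π / 2
  have hsin := abs_mul_abs_sin_sub_one_le_of_tsum_eq_zero hqn hn'.le hε hroot
  set B := |q ^ n| ^ 3 / (1 - |q ^ n| ^ 2)
  calc _ ≤ 2 * (B * (1 / (3 * n))) + B * (2 / n) := by
        grw [abs_add_le, abs_mul 2, abs_two, htail, hsin]
    _ = 8 / (3 * n) * B := by ring

theorem r0_bound (q β : ℝ) (hq : q ∈ Set.Ioo (0 : ℝ) 1) (hβ : β ∈ Set.Ico (0 : ℝ) 2)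
    (n : ℕ) (hn : 0 < n) (θ : ℝ) (hθ : θ ∈ Set.Ico (0 : ℝ) 1)
    (hroot : ∑' ν : ℕ, q ^ ((2 * ν + 1) * n) *
      Real.cos ((2 * (ν : ℝ) + 1) * θ * π - β * π / 2) = 0)
    (y₀ : ℝ) (hy₀ : y₀ = θ * π / n)
    (s : ℕ) (hs : s = 0 ∨ s = 1)
    (hsign : ((-1 : ℝ)) ^ s = Real.sign (Real.sin ((n : ℝ) * y₀ - β * π / 2))) :
    |(2 * ∑' m : ℕ, q ^ ((2 * m + 3) * n) / ((2 * (m : ℝ) + 3) * n) *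
        Real.cos ((2 * (m : ℝ) + 3) * n * y₀ - (β + 1) * π / 2)) +
      ((-1 : ℝ)) ^ s * 2 * (q ^ n / n) * (|Real.sin ((n : ℝ) * y₀ - β * π / 2)| - 1)| ≤
    (8 / (3 * n)) * (q ^ (3 * n) / (1 - q ^ (2 * n))) := by
  have hq_abs : |q| = q := abs_of_pos hq.1
  simpa only [hq_abs] using
    r0_bound_general (hq_abs.trans_lt hq.2) hn β θ hroot hy₀ (abs_neg_one_pow s).le
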